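/- Let Γ be a group acting transitively on an infinite set X, and for every real number r > 0 let G_r ⊆ Γ be a finite subset such that G_r ⊆ G_s whenever 0 < r ≤ s, and such that the union of the G_r over all r > 0 is all of Γ. Then there exists R > 0 such that one of the following holds: either for every r ≥ R every orbit on X of the subgroup ⟨G_r⟩ generated by G_r is infinite, or for every r ≥ R the action of ⟨G_r⟩ on X has infinitely many finite orbits. -/

import Mathlib

/-!
Enlarging a subgroup enlarges its orbits, so the set `F` of points with finite orbit can only
shrink. Suppose that `F` is finite at some stage. As all orbits of the whole group are infinite,
each `x ∈ F` is carried outside `F` by some `g x`. Once a subgroup contains these finitely many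
elements `g x`, a point `x` with finite orbit would lie in `F` and share its orbit with
`g x • x ∉ F`; so all orbits are infinite from then on.
-/

open MulAction Filter

section FiniteOrbitPoints

/-- The points whose orbit is finite. Counting these points rather than the finite orbits
themselves allows different acting subgroups to be compared by inclusion. -/
def finiteOrbitPoints (M X : Type*) [SMul M X] : Set X :=
  {x | (orbit M x).Finite}

theorem setOf_finite_orbits_eq_image (M X : Type*) [SMul M X] :
    {s : Set X | (∃ x : X, s = orbit M x) ∧ s.Finite} = orbit M '' finiteOrbitPoints M X := by
  ext s
  constructor
  · rintro ⟨⟨x, rfl⟩, hx⟩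
    exact ⟨x, hx, rfl⟩
  · rintro ⟨x, hx, rfl⟩
    exact ⟨⟨x, rfl⟩, hx⟩

theorem finite_setOf_finite_orbits_iff (M X : Type*) [Monoid M] [MulAction M X] :
    {s : Set X | (∃ x : X, s = orbit M x) ∧ s.Finite}.Finite ↔
      (finiteOrbitPoints M X).Finite := by
  rw [setOf_finite_orbits_eq_image]
  refine ⟨fun h => ?_, fun h => h.image _⟩
  have hunion : (⋃₀ (orbit M '' finiteOrbitPoints M X)).Finite :=
    h.sUnion (Set.forall_mem_image.2 fun _ hx => hx)
  exact hunion.subset fun x hx => ⟨orbit M x, Set.mem_image_of_mem _ hx, mem_orbit_self x⟩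

variable {Γ X : Type*} [Group Γ] [MulAction Γ X]

theorem smul_mem_finiteOrbitPoints_iff (g : Γ) (x : X) :
    g • x ∈ finiteOrbitPoints Γ X ↔ x ∈ finiteOrbitPoints Γ X := by
  simp only [finiteOrbitPoints, Set.mem_ofPred_eq, orbit_smul]

theorem finiteOrbitPoints_antitone :
    Antitone fun H : Subgroup Γ => finiteOrbitPoints H X := by
  intro H K hHK x hx
  refine Set.Finite.subset hx ?_
  rintro _ ⟨h, rfl⟩
  exact mem_orbit x (⟨h, hHK h.2⟩ : K)

end FiniteOrbitPoints

section Exhaustion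

variable {Γ X ι : Type*} [Group Γ] [MulAction Γ X] [Preorder ι]

theorem eventually_finiteOrbitPoints_eq_empty {H : ι → Subgroup Γ} (hmono : Monotone H)
    (hexh : ∀ g : Γ, ∃ i, g ∈ H i) (hinf : ∀ x : X, (orbit Γ x).Infinite) {i₀ : ι}
    (hfin : (finiteOrbitPoints (H i₀) X).Finite) :
    ∀ᶠ i in atTop, finiteOrbitPoints (H i) X = ∅ := by
  have hescape : ∀ x : X, ∃ g : Γ, g • x ∉ finiteOrbitPoints (H i₀) X := fun x => by
    obtain ⟨_, ⟨g, rfl⟩, hg⟩ := (hinf x).exists_notMem_finite hfin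
    exact ⟨g, hg⟩
  choose g hg using hescape
  have hmem : ∀ᶠ i in atTop, ∀ x ∈ finiteOrbitPoints (H i₀) X, g x ∈ H i :=
    (eventually_all_finite hfin).2 fun x _ => by
      obtain ⟨j, hj⟩ := hexh (g x)
      filter_upwards [eventually_ge_atTop j] with i hji using hmono hji hj
  filter_upwards [hmem, eventually_ge_atTop i₀] with i hgi hi
  have hsub : finiteOrbitPoints (H i) X ⊆ finiteOrbitPoints (H i₀) X :=
    finiteOrbitPoints_antitone (hmono hi)
  refine Set.eq_empty_of_forall_notMem fun x hx => hg x (hsub ?_)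
  exact (smul_mem_finiteOrbitPoints_iff (⟨g x, hgi x (hsub hx)⟩ : H i) x).2 hx

theorem stmt_3_general [IsDirectedOrder ι] {H : ι → Subgroup Γ} (hmono : Monotone H)
    (hexh : ∀ g : Γ, ∃ i, g ∈ H i) (hinf : ∀ x : X, (orbit Γ x).Infinite) :
    (∃ i₀, ∀ i ≥ i₀, ∀ x : X, (orbit (H i) x).Infinite) ∨
      ∀ i, {s : Set X | (∃ x : X, s = orbit (H i) x) ∧ s.Finite}.Infinite := by
  refine or_iff_not_imp_right.2 fun hfinite => ?_
  simp only [not_forall, Set.not_infinite, finite_setOf_finite_orbits_iff] at hfinite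
  obtain ⟨i₀, hfin⟩ := hfinite
  have : Nonempty ι := ⟨i₀⟩
  obtain ⟨i₁, hempty⟩ :=
    eventually_atTop.1 (eventually_finiteOrbitPoints_eq_empty hmono hexh hinf hfin)
  exact ⟨i₁, fun i hi => Set.eq_empty_iff_forall_notMem.1 (hempty i hi)⟩

end Exhaustion

/-- the "orbit cases" lemma.  Let `Γ` act transitively on an infinite set
`X`, and let `G r ⊆ Γ` (for `r > 0`) be finite sets, monotone in `r` and exhausting `Γ`.
Then there is `R > 0` such that either for every `r ≥ R` all orbits of the subgroup generated
by `G r` are infinite, or for every `r ≥ R` the action of that subgroup has infinitely many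
finite orbits. -/
theorem stmt_3 {Γ X : Type*} [Group Γ] [MulAction Γ X] [MulAction.IsPretransitive Γ X]
    [Infinite X] (G : ℝ → Set Γ)
    (hfin : ∀ r : ℝ, 0 < r → (G r).Finite)
    (hmono : ∀ r s : ℝ, 0 < r → r ≤ s → G r ⊆ G s)
    (hexh : ∀ g : Γ, ∃ r : ℝ, 0 < r ∧ g ∈ G r) :
    ∃ R : ℝ, 0 < R ∧
      ((∀ r : ℝ, R ≤ r → ∀ x : X, (MulAction.orbit (Subgroup.closure (G r)) x).Infinite) ∨
       (∀ r : ℝ, R ≤ r →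
         {s : Set X | (∃ x : X, s = MulAction.orbit (Subgroup.closure (G r)) x) ∧
           s.Finite}.Infinite)) := by
  have hinf (x : X) : (orbit Γ x).Infinite := orbit_eq_univ Γ x ▸ Set.infinite_univ
  obtain ⟨R, hR⟩ | hR := stmt_3_general (ι := Set.Ioi (0 : ℝ))
    (H := fun r => Subgroup.closure (G r))
    (fun r s hrs => Subgroup.closure_mono (hmono r s r.2 hrs))
    (fun g => (hexh g).elim fun r hr => ⟨⟨r, hr.1⟩, Subgroup.subset_closure hr.2⟩) hinf
  · exact ⟨R, R.2, .inl fun r hr => hR ⟨r, R.2.trans_le hr⟩ hr⟩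
  · exact ⟨1, one_pos, .inr fun r hr => hR ⟨r, one_pos.trans_le hr⟩⟩
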